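/- Let n ≥ 1 and E = EuclideanSpace ℝ (Fin (n+1)). Let x, y ∈ E with x ≠ y such that the line {y + t • (x − y) : t ∈ ℝ} through x and y is disjoint from the closed unit ball centered at the origin. Let μ be the (n−1)-dimensional Hausdorff measure restricted to Z(y) = {σ ∈ E : ‖σ‖ = 1 ∧ ⟪y, σ⟫ = 1}. Then the real part of i^n · ∫_{Z(y)} ‖y − σ‖^{−1} (⟪x − y, σ⟫ − iε)^{−n} dμ(σ) tends to 0 as ε → 0⁺; i.e. Tendsto (fun ε : ℝ => (Complex.I ^ n * ∫ σ in Z(y), (‖y − σ‖⁻¹ : ℂ) * ((⟪x − y, σ⟫ : ℂ) − ε * Complex.I) ^ (−(n : ℤ)) ∂μ).re) (𝓝[>] 0) (𝓝 0). -/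

import Mathlib

open scoped InnerProductSpace
open MeasureTheory Filter Topology

/-!
`Z(y)` is a sphere of dimension `n - 1` in a hyperplane, so its Hausdorff measure is finite and
orthogonally invariant about its centre. Reflection in a moving hyperplane shows that the projection
of such a measure to a line integrates by parts against the weight `R² - s²`, as the Gegenbauer
weights do. Hence its Cauchy transforms `G k z = ∫ (s + z)⁻ᵏ`, with `k = n - 1`, satisfy
`z * G k z = (z² - R²) * G (k + 1) z`, while `(G k)' = -k * G (k + 1)`. It follows that
`(G k z)² * (z² - R²) ^ k` is constant on the lower half plane, with value `M²` at infinity, where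
`M` is the total mass, so `(G n z)² = z² * M² / (z² - R²) ^ (n + 1)`.

On `Z(y)` the factor `‖y - σ‖⁻¹` is constant, and `Q_n` is a multiple of `G n` at a real point
`a`; the line through `x` and `y` misses the ball exactly when `a² < R²`. Then
`(iⁿ * G n (a - iε))²` tends to a nonpositive real number, so the limit points of
`iⁿ * G n (a - iε)` are purely imaginary.
-/

open Metric Module Function
open scoped Measure

section HausdorffMeasureSphere

variable {V : Type*} [NormedAddCommGroup V] [InnerProductSpace ℝ V]

theorem exists_stereoInvFunAux_eq_of_inner_nonpos {v σ : V} (hv : ‖v‖ = 1) (hσ : ‖σ‖ = 1)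
    (hvσ : ⟪v, σ⟫_ℝ ≤ 0) :
    ∃ w ∈ closedBall (0 : (ℝ ∙ v)ᗮ) 2, stereoInvFunAux v (w : V) = σ := by
  refine ⟨stereoToFun v σ, ?_, ?_⟩
  · have hproj : ‖(ℝ ∙ v)ᗮ.orthogonalProjectionOnto σ‖ ≤ 1 :=
      ((ℝ ∙ v)ᗮ.norm_orthogonalProjectionOnto_apply_le σ).trans hσ.le
    have hscale : ‖2 / (1 - ⟪v, σ⟫_ℝ)‖ ≤ 2 := by
      rw [Real.norm_of_nonneg (by positivity [sub_nonneg.2 (hvσ.trans zero_le_one)])]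
      exact div_le_self zero_le_two (by linarith)
    rw [mem_closedBall_zero_iff, stereoToFun_apply, norm_smul, innerSL_apply_apply]
    simpa using mul_le_mul hscale hproj (norm_nonneg _) zero_le_two
  · have hne : σ ≠ v := by
      rintro rfl
      rw [real_inner_self_eq_norm_sq, hσ] at hvσ
      norm_num at hvσ
    exact congrArg Subtype.val
      (stereo_left_inv hv (x := ⟨σ, mem_sphere_zero_iff_norm.2 hσ⟩) hne)

variable [FiniteDimensional ℝ V] [MeasurableSpace V] [BorelSpace V]

theorem hausdorffMeasure_hemisphere_lt_top {k : ℕ} (hV : finrank ℝ V = k + 1) {v : V}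
    (hv : ‖v‖ = 1) : μH[k] {σ : V | ‖σ‖ = 1 ∧ ⟪v, σ⟫_ℝ ≤ 0} < ⊤ := by
  have : Fact (finrank ℝ V = k + 1) := ⟨hV⟩
  have hdim : finrank ℝ (ℝ ∙ v)ᗮ = k :=
    Submodule.finrank_orthogonal_span_singleton (norm_ne_zero_iff.1 (by simp [hv]))
  have hball : IsCompact (closedBall (0 : (ℝ ∙ v)ᗮ) 2) := isCompact_closedBall 0 2
  have hsmooth : ContDiff ℝ 1 fun w : (ℝ ∙ v)ᗮ ↦ stereoInvFunAux v (w : V) :=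
    contDiff_stereoInvFunAux.comp (ℝ ∙ v)ᗮ.subtypeL.contDiff
  obtain ⟨C, hC⟩ := hsmooth.locallyLipschitz.locallyLipschitzOn.exists_lipschitzOnWith_of_compact
    hball
  calc μH[k] {σ : V | ‖σ‖ = 1 ∧ ⟪v, σ⟫_ℝ ≤ 0}
      ≤ μH[k] ((fun w : (ℝ ∙ v)ᗮ ↦ stereoInvFunAux v (w : V)) '' closedBall 0 2) :=
        measure_mono fun _ hσ ↦ exists_stereoInvFunAux_eq_of_inner_nonpos hv hσ.1 hσ.2
    _ ≤ C ^ (k : ℝ) * μH[k] (closedBall (0 : (ℝ ∙ v)ᗮ) 2) :=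
        hC.hausdorffMeasure_image_le k.cast_nonneg
    _ < ⊤ := by
      rw [← hdim]
      exact ENNReal.mul_lt_top (by simp) hball.measure_lt_top

theorem hausdorffMeasure_sphere_lt_top {k : ℕ} (hV : finrank ℝ V = k + 1) (r : ℝ) :
    μH[k] (sphere (0 : V) r) < ⊤ := by
  have : Nontrivial V := nontrivial_of_finrank_eq_succ hV
  obtain ⟨v, hv⟩ := exists_norm_eq V zero_le_one
  have hunit : μH[k] (sphere (0 : V) 1) < ⊤ := by
    refine (measure_mono fun σ hσ ↦ ?_).trans_lt
      (measure_union_lt_top (hausdorffMeasure_hemisphere_lt_top hV hv)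
        (hausdorffMeasure_hemisphere_lt_top hV ((norm_neg v).trans hv)))
    rw [mem_sphere_zero_iff_norm] at hσ
    rcases le_total ⟪v, σ⟫_ℝ 0 with h | h
    · exact Or.inl ⟨hσ, h⟩
    · exact Or.inr ⟨hσ, by simpa [inner_neg_left] using h⟩
  rcases lt_or_ge r 0 with hr | hr
  · simp [sphere_eq_empty_of_neg hr]
  · calc μH[k] (sphere (0 : V) r) = μH[k] ((r • ·) '' sphere (0 : V) 1) := by
          rw [Set.image_smul, _root_.smul_sphere _ _ zero_le_one, smul_zero, Real.norm_of_nonneg hr,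
            mul_one]
      _ ≤ ‖r‖₊ ^ (k : ℝ) * μH[k] (sphere (0 : V) 1) :=
          (lipschitzWith_smul r).hausdorffMeasure_image_le k.cast_nonneg _
      _ < ⊤ := ENNReal.mul_lt_top (by simp) hunit

end HausdorffMeasureSphere

section IntegrationByParts

theorem integrable_of_continuous_of_ae_mem_isCompact {X E : Type*} [TopologicalSpace X]
    [MeasurableSpace X] [OpensMeasurableSpace X] [NormedAddCommGroup E]
    [SecondCountableTopologyEither X E] {ν : Measure X} [IsFiniteMeasure ν] {K : Set X}
    (hK : IsCompact K) (hνK : ∀ᵐ x ∂ν, x ∈ K) {F : X → E} (hF : Continuous F) :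
    Integrable F ν := by
  obtain ⟨C, hC⟩ := hK.exists_bound_of_continuousOn hF.continuousOn
  exact .of_bound hF.aestronglyMeasurable C (hνK.mono hC)

theorem hasDerivAt_integral_of_ae_mem_isCompact {X E : Type*} [TopologicalSpace X]
    [MeasurableSpace X] [OpensMeasurableSpace X] [NormedAddCommGroup E] [NormedSpace ℝ E]
    [SecondCountableTopologyEither X E] {ν : Measure X} [IsFiniteMeasure ν] {K : Set X}
    (hK : IsCompact K) (hνK : ∀ᵐ x ∂ν, x ∈ K) {F F' : ℝ → X → E} (hF : ∀ t, Continuous (F t))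
    (hF' : Continuous (uncurry F')) (hFF' : ∀ t x, HasDerivAt (F · x) (F' t x) t) (t₀ : ℝ) :
    HasDerivAt (fun t ↦ ∫ x, F t x ∂ν) (∫ x, F' t₀ x ∂ν) t₀ := by
  obtain ⟨C, hC⟩ := ((isCompact_closedBall t₀ 1).prod hK).exists_bound_of_continuousOn
    hF'.continuousOn
  refine (hasDerivAt_integral_of_dominated_loc_of_deriv_le (bound := fun _ ↦ C)
    (closedBall_mem_nhds t₀ one_pos) (.of_forall fun t ↦ (hF t).aestronglyMeasurable)
    (integrable_of_continuous_of_ae_mem_isCompact hK hνK (hF t₀))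
    (hF'.comp (.prodMk_right t₀)).aestronglyMeasurable ?_ (integrable_const C)
    (.of_forall fun x t _ ↦ hFF' t x)).2
  filter_upwards [hνK] with x hx t ht using hC (t, x) ⟨ht, hx⟩

variable {V : Type*} [NormedAddCommGroup V] [InnerProductSpace ℝ V]

theorem sum_inner_inner_smul_sub {ι : Type*} [Fintype ι] (b : OrthonormalBasis ι ℝ V) (w ω : V) :
    ∑ i, ⟪⟪w, b i⟫_ℝ • b i - w, ω⟫_ℝ = (1 - Fintype.card ι) * ⟪w, ω⟫_ℝ := by
  simp only [inner_sub_left, real_inner_smul_left, Finset.sum_sub_distrib, b.sum_inner_mul_inner,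
    Finset.sum_const, Finset.card_univ, nsmul_eq_mul]
  ring

theorem sum_inner_smul_sub_smul_mul_inner {ι : Type*} [Fintype ι] (b : OrthonormalBasis ι ℝ V)
    (w ω : V) :
    ∑ i, ⟪‖w‖ ^ 2 • b i - ⟪w, b i⟫_ℝ • w, ω⟫_ℝ * ⟪b i, ω⟫_ℝ =
      ‖w‖ ^ 2 * ‖ω‖ ^ 2 - ⟪w, ω⟫_ℝ ^ 2 := by
  calc ∑ i, ⟪‖w‖ ^ 2 • b i - ⟪w, b i⟫_ℝ • w, ω⟫_ℝ * ⟪b i, ω⟫_ℝ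
      = ‖w‖ ^ 2 * ∑ i, ⟪b i, ω⟫_ℝ ^ 2 - ⟪w, ω⟫_ℝ * ∑ i, ⟪w, b i⟫_ℝ * ⟪b i, ω⟫_ℝ := by
        rw [Finset.mul_sum, Finset.mul_sum, ← Finset.sum_sub_distrib]
        refine Finset.sum_congr rfl fun i _ ↦ ?_
        rw [inner_sub_left, real_inner_smul_left, real_inner_smul_left]
        ring
    _ = ‖w‖ ^ 2 * ‖ω‖ ^ 2 - ⟪w, ω⟫_ℝ ^ 2 := by
      rw [b.sum_sq_inner_right, b.sum_inner_mul_inner, ← sq]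

variable [MeasurableSpace V]

/-- Invariance of a measure under the orthogonal group of `V`: all that the integration by parts
below uses of the measure on a sphere. -/
def IsOrthogonallyInvariant (ν : Measure V) : Prop :=
  ∀ T : V ≃ₗᵢ[ℝ] V, MeasurePreserving T ν ν

theorem isOrthogonallyInvariant_hausdorffMeasure_restrict_sphere [BorelSpace V] (d r : ℝ) :
    IsOrthogonallyInvariant (μH[d].restrict (sphere (0 : V) r)) := fun T ↦ by
  have h := (T.toIsometryEquiv.measurePreserving_hausdorffMeasure d).restrict_preimage
    (isClosed_sphere (x := (0 : V)) (ε := r)).measurableSet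
  rwa [T.toIsometryEquiv.preimage_sphere, show T.toIsometryEquiv.symm 0 = 0 from T.symm.map_zero]
    at h

variable {ν : Measure V}

theorem IsOrthogonallyInvariant.integral_inner_mul_comp_inner_eq_zero [BorelSpace V]
    (hν : IsOrthogonallyInvariant ν) {g w : V} (hgw : ⟪g, w⟫_ℝ = 0) (f : ℝ → ℂ) :
    ∫ ω, (⟪g, ω⟫_ℝ : ℂ) * f ⟪w, ω⟫_ℝ ∂ν = 0 := by
  set T := (ℝ ∙ g)ᗮ.reflection
  have hTg : T g = -g :=
    Submodule.reflection_mem_subspace_orthogonal_precomplement_eq_neg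
      (Submodule.mem_span_singleton_self g)
  have hTw : T w = w :=
    Submodule.reflection_mem_subspace_eq_self
      (Submodule.mem_orthogonal_singleton_iff_inner_right.2 hgw)
  have hflip : ∀ ω, (⟪g, T ω⟫_ℝ : ℂ) * f ⟪w, T ω⟫_ℝ = -((⟪g, ω⟫_ℝ : ℂ) * f ⟪w, ω⟫_ℝ) := by
    intro ω
    have hg : ⟪g, T ω⟫_ℝ = -⟪g, ω⟫_ℝ := by
      rw [← T.inner_map_map g ω, hTg, inner_neg_left, neg_neg]
    have hw : ⟪w, T ω⟫_ℝ = ⟪w, ω⟫_ℝ := by rw [← T.inner_map_map w ω, hTw]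
    rw [hg, hw, Complex.ofReal_neg, neg_mul]
  have h := (hν T).integral_comp T.toHomeomorph.measurableEmbedding
    fun ω ↦ (⟪g, ω⟫_ℝ : ℂ) * f ⟪w, ω⟫_ℝ
  simp only [hflip, integral_neg] at h
  exact neg_eq_self.1 h

variable [FiniteDimensional ℝ V] [BorelSpace V] [IsFiniteMeasure ν] {r : ℝ} {f f' : ℝ → ℂ}

/- The infinitesimal form of the vanishing above: move `w` with velocity `u`, and keep `g`
orthogonal to it with velocity `g'`. -/
theorem IsOrthogonallyInvariant.integral_inner_mul_comp_inner_add_eq_zero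
    (hν : IsOrthogonallyInvariant ν) (hr : ∀ᵐ ω ∂ν, ‖ω‖ ≤ r) (hf : ∀ s, HasDerivAt f (f' s) s)
    (hf' : Continuous f') {w u g g' : V} (horth : ∀ t : ℝ, ⟪g + t • g', w + t • u⟫_ℝ = 0) :
    ∫ ω, ((⟪g', ω⟫_ℝ : ℂ) * f ⟪w, ω⟫_ℝ +
      (⟪g, ω⟫_ℝ * ⟪u, ω⟫_ℝ : ℂ) * f' ⟪w, ω⟫_ℝ) ∂ν = 0 := by
  have hfc : Continuous f := continuous_iff_continuousAt.2 fun s ↦ (hf s).continuousAt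
  have hderiv : ∀ (t : ℝ) (ω : V), HasDerivAt
      (fun t : ℝ ↦ (⟪g + t • g', ω⟫_ℝ : ℂ) * f ⟪w + t • u, ω⟫_ℝ)
      ((⟪g', ω⟫_ℝ : ℂ) * f ⟪w + t • u, ω⟫_ℝ +
        (⟪g + t • g', ω⟫_ℝ * ⟪u, ω⟫_ℝ : ℂ) * f' ⟪w + t • u, ω⟫_ℝ) t := by
    intro t ω
    have hline : ∀ p q : V, HasDerivAt (fun t : ℝ ↦ ⟪p + t • q, ω⟫_ℝ) ⟪q, ω⟫_ℝ t := fun p q ↦ by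
      simpa [inner_add_left, inner_smul_left] using
        ((hasDerivAt_id t).mul_const ⟪q, ω⟫_ℝ).const_add ⟪p, ω⟫_ℝ
    refine ((hline g g').ofReal_comp.mul ((hf _).scomp t (hline w u))).congr_deriv ?_
    rw [Complex.real_smul, mul_assoc]; rfl
  have h := hasDerivAt_integral_of_ae_mem_isCompact (isCompact_closedBall (0 : V) r)
    (by simpa using hr) (fun t ↦ by fun_prop) (by unfold uncurry; fun_prop) hderiv 0
  simp only [hν.integral_inner_mul_comp_inner_eq_zero (horth _), zero_smul, add_zero] at h
  exact h.unique (hasDerivAt_const 0 0)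

theorem IsOrthogonallyInvariant.integral_mul_deriv_comp_inner
    (hν : IsOrthogonallyInvariant ν) (hr : ∀ᵐ ω ∂ν, ‖ω‖ ≤ r) (hf : ∀ s, HasDerivAt f (f' s) s)
    (hf' : Continuous f') (w : V) :
    ∫ ω, ((‖w‖ ^ 2 * ‖ω‖ ^ 2 - ⟪w, ω⟫_ℝ ^ 2 : ℝ) : ℂ) * f' ⟪w, ω⟫_ℝ ∂ν =
      (finrank ℝ V - 1) * ∫ ω, (⟪w, ω⟫_ℝ : ℂ) * f ⟪w, ω⟫_ℝ ∂ν := by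
  have hfc : Continuous f := continuous_iff_continuousAt.2 fun s ↦ (hf s).continuousAt
  have hintegrable : ∀ F : V → ℂ, Continuous F → Integrable F ν := fun _ ↦
    integrable_of_continuous_of_ae_mem_isCompact (isCompact_closedBall (0 : V) r)
      (by simpa using hr)
  -- Move `w` towards each vector of an orthonormal basis, with `g` the component of that vector
  -- orthogonal to `w`, scaled by `‖w‖ ^ 2`; summing over the basis gives the identity.
  set b := stdOrthonormalBasis ℝ V
  have hrot : ∀ i, ∫ ω, ((⟪⟪w, b i⟫_ℝ • b i - w, ω⟫_ℝ : ℂ) * f ⟪w, ω⟫_ℝ +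
      (⟪‖w‖ ^ 2 • b i - ⟪w, b i⟫_ℝ • w, ω⟫_ℝ * ⟪b i, ω⟫_ℝ : ℂ) * f' ⟪w, ω⟫_ℝ) ∂ν = 0 := by
    refine fun i ↦ hν.integral_inner_mul_comp_inner_add_eq_zero hr hf hf' fun t ↦ ?_
    have hself : ⟪b i, b i⟫_ℝ = 1 := inner_self_eq_one_of_norm_eq_one (b.norm_eq_one i)
    simp only [inner_add_left, inner_add_right, inner_sub_left, real_inner_smul_left,
      real_inner_smul_right, hself, real_inner_self_eq_norm_sq, real_inner_comm w (b i)]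
    ring
  have hsum : ∀ ω, ∑ i, ((⟪⟪w, b i⟫_ℝ • b i - w, ω⟫_ℝ : ℂ) * f ⟪w, ω⟫_ℝ +
      (⟪‖w‖ ^ 2 • b i - ⟪w, b i⟫_ℝ • w, ω⟫_ℝ * ⟪b i, ω⟫_ℝ : ℂ) * f' ⟪w, ω⟫_ℝ) =
      ((‖w‖ ^ 2 * ‖ω‖ ^ 2 - ⟪w, ω⟫_ℝ ^ 2 : ℝ) : ℂ) * f' ⟪w, ω⟫_ℝ -
        (finrank ℝ V - 1) * ((⟪w, ω⟫_ℝ : ℂ) * f ⟪w, ω⟫_ℝ) := by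
    intro ω
    rw [Finset.sum_add_distrib, ← Finset.sum_mul, ← Finset.sum_mul]
    simp only [← Complex.ofReal_mul, ← Complex.ofReal_sum, sum_inner_inner_smul_sub,
      sum_inner_smul_sub_smul_mul_inner, Fintype.card_fin]
    push_cast
    ring
  rw [← sub_eq_zero, ← integral_const_mul, ← integral_sub (hintegrable _ (by fun_prop))
    (hintegrable _ (by fun_prop)), ← integral_congr_ae (.of_forall hsum), integral_finsetSum _
    fun i _ ↦ hintegrable _ (by fun_prop)]
  exact Finset.sum_eq_zero fun i _ ↦ hrot i

end IntegrationByParts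

section CauchyTransform

/-- The Cauchy–Stieltjes transform of order `k` of a measure `m` on the line, in the variable
`-z`. Its boundary values from the lower half plane are the integrals `Q_n`, up to a
factor. -/
noncomputable def cauchyTransform (m : Measure ℝ) (k : ℕ) (z : ℂ) : ℂ :=
  ∫ s, ((s : ℂ) + z) ^ (-(k : ℤ)) ∂m

theorem ofReal_add_ne_zero {z : ℂ} (hz : z.im ≠ 0) (s : ℝ) : (s : ℂ) + z ≠ 0 := fun h ↦
  hz (by simpa using congrArg Complex.im h)

theorem norm_ofReal_add_zpow_neg_le {z : ℂ} {δ : ℝ} (hδ : 0 < δ) (hz : δ ≤ |z.im|) (s : ℝ)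
    (k : ℕ) : ‖((s : ℂ) + z) ^ (-(k : ℤ))‖ ≤ δ⁻¹ ^ k := by
  have him : |z.im| ≤ ‖(s : ℂ) + z‖ := by simpa using Complex.abs_im_le_norm ((s : ℂ) + z)
  rw [zpow_neg, zpow_natCast, ← inv_pow, norm_pow, norm_inv]
  gcongr
  exact hz.trans him

theorem measurable_ofReal_add_zpow_neg (k : ℕ) (z : ℂ) :
    Measurable fun s : ℝ ↦ ((s : ℂ) + z) ^ (-(k : ℤ)) := by
  simp only [zpow_neg, zpow_natCast]
  fun_prop

theorem continuous_ofReal_add_zpow {z : ℂ} (hz : z.im ≠ 0) (p : ℤ) :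
    Continuous fun s : ℝ ↦ ((s : ℂ) + z) ^ p :=
  (Complex.continuous_ofReal.add_const z).zpow₀ p fun s ↦ Or.inl (ofReal_add_ne_zero hz s)

theorem tendsto_pow_mul_ofReal_add_zpow_neg (k : ℕ) (s : ℝ) :
    Tendsto (fun t : ℝ ↦ (-(t * Complex.I)) ^ k * ((s : ℂ) + -(t * Complex.I)) ^ (-(k : ℤ))) atTop
      (𝓝 1) := by
  have hinv : Tendsto (fun t : ℝ ↦ ((t⁻¹ : ℝ) : ℂ)) atTop (𝓝 0) := by
    simpa using tendsto_inv_atTop_zero.ofReal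
  have h := (((hinv.const_mul (s * Complex.I)).add_const 1).inv₀ (by simp)).pow k
  rw [mul_zero, zero_add, inv_one, one_pow] at h
  refine h.congr' ?_
  filter_upwards [eventually_gt_atTop 0] with t ht
  have ht' : (t : ℂ) ≠ 0 := by exact_mod_cast ht.ne'
  have hfactor : (s : ℂ) + -(t * Complex.I) =
      -(t * Complex.I) * (s * Complex.I * (t⁻¹ : ℝ) + 1) := by
    push_cast
    field_simp
    linear_combination (s : ℂ) * Complex.I_sq
  rw [hfactor, zpow_neg, zpow_natCast, mul_pow, mul_inv, inv_pow,
    mul_inv_cancel_left₀ (by simp [ht'])]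

variable {m : Measure ℝ} [IsFiniteMeasure m]

theorem hasDerivAt_cauchyTransform (k : ℕ) {z : ℂ} (hz : z.im ≠ 0) :
    HasDerivAt (cauchyTransform m k) (-k * cauchyTransform m (k + 1) z) z := by
  set δ := |z.im| / 2
  have hδ : 0 < δ := by positivity
  have hnhds : {w : ℂ | δ < |w.im|} ∈ 𝓝 z :=
    (isOpen_lt continuous_const Complex.continuous_im.abs).mem_nhds
      (half_lt_self (abs_pos.2 hz))
  have him : ∀ w ∈ {w : ℂ | δ < |w.im|}, w.im ≠ 0 := fun w hw ↦ abs_pos.1 (hδ.trans hw)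
  unfold cauchyTransform
  rw [← integral_const_mul]
  refine (hasDerivAt_integral_of_dominated_loc_of_deriv_le
    (F := fun (w : ℂ) (s : ℝ) ↦ ((s : ℂ) + w) ^ (-(k : ℤ)))
    (F' := fun (w : ℂ) (s : ℝ) ↦ -(k : ℂ) * ((s : ℂ) + w) ^ (-((k + 1 : ℕ) : ℤ)))
    (bound := fun _ ↦ k * δ⁻¹ ^ (k + 1)) hnhds
    (.of_forall fun w ↦ (measurable_ofReal_add_zpow_neg k w).aestronglyMeasurable)
    (.of_bound (measurable_ofReal_add_zpow_neg k z).aestronglyMeasurable (δ⁻¹ ^ k)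
      (.of_forall fun s ↦ ?_))
    ((measurable_ofReal_add_zpow_neg (k + 1) z).const_mul _).aestronglyMeasurable
    (.of_forall fun s w hw ↦ ?_) (integrable_const _) (.of_forall fun s w hw ↦ ?_)).2
  · exact norm_ofReal_add_zpow_neg_le hδ (half_le_self (abs_nonneg _)) s k
  · rw [norm_mul, norm_neg, Complex.norm_natCast]
    gcongr
    exact norm_ofReal_add_zpow_neg_le hδ (le_of_lt hw) s (k + 1)
  · have h := ((hasDerivAt_zpow (-(k : ℤ)) _ (.inl (ofReal_add_ne_zero (him w hw) s))).comp w
      ((hasDerivAt_id w).const_add (s : ℂ)))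
    refine h.congr_deriv ?_
    push_cast
    rw [mul_one, neg_add']

theorem tendsto_pow_mul_cauchyTransform (k : ℕ) :
    Tendsto (fun t : ℝ ↦ (-(t * Complex.I)) ^ k * cauchyTransform m k (-(t * Complex.I))) atTop
      (𝓝 (m.real Set.univ)) := by
  have hmain := tendsto_integral_filter_of_dominated_convergence (μ := m) (l := atTop)
    (F := fun (t : ℝ) (s : ℝ) ↦
      (-(t * Complex.I)) ^ k * ((s : ℂ) + -(t * Complex.I)) ^ (-(k : ℤ)))
    (fun _ ↦ (1 : ℝ)) ?_ ?_ (integrable_const _)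
    (.of_forall (tendsto_pow_mul_ofReal_add_zpow_neg k))
  · simpa [cauchyTransform, integral_const_mul] using hmain
  · filter_upwards [eventually_gt_atTop 0] with t ht
    exact ((continuous_ofReal_add_zpow (by simp [ht.ne']) _).const_mul _).aestronglyMeasurable
  · filter_upwards [eventually_gt_atTop 0] with t ht
    refine .of_forall fun s ↦ ?_
    have h := norm_ofReal_add_zpow_neg_le (z := -(t * Complex.I)) ht (by simp [le_abs_self]) s k
    calc ‖(-(t * Complex.I)) ^ k * ((s : ℂ) + -(t * Complex.I)) ^ (-(k : ℤ))‖
        ≤ t ^ k * t⁻¹ ^ k := by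
          rw [norm_mul, norm_pow]
          gcongr
          simp [abs_of_pos ht]
      _ = 1 := by rw [← mul_pow, mul_inv_cancel₀ ht.ne', one_pow]

end CauchyTransform

section Gegenbauer

/-- The orthogonal projections to a line of the uniform measures on the `k`-sphere of radius `R`
in dimension `k + 1`, characterized up to a factor by integration by parts against the Gegenbauer
weight `(R² - s²)^((k - 2) / 2)`. For `k = 0`, where the measure consists of equal masses at `±R`,
the integration by parts does not see the mean, which is why the latter is a separate field. -/
structure IsGegenbauer (m : Measure ℝ) (k : ℕ) (R : ℝ) : Prop where
  ae_abs_le : ∀ᵐ s ∂m, |s| ≤ R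
  integral_id : ∫ s, (s : ℂ) ∂m = 0
  integral_mul_deriv : ∀ f f' : ℝ → ℂ, (∀ s, HasDerivAt f (f' s) s) → Continuous f' →
    ∫ s, ((R ^ 2 - s ^ 2 : ℝ) : ℂ) * f' s ∂m = k * ∫ s, (s : ℂ) * f s ∂m

namespace IsGegenbauer

variable {m : Measure ℝ} {k : ℕ} {R : ℝ} {z : ℂ}

/- Integrate by parts an antiderivative of `(s + z) ^ (-(k + 1))`, which is a logarithm when
`k = 0`. -/
theorem integral_mul_zpow (hm : IsGegenbauer m k R) (hz : z.im ≠ 0) :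
    ∫ s, ((R ^ 2 - s ^ 2 : ℝ) : ℂ) * ((s : ℂ) + z) ^ (-((k + 1 : ℕ) : ℤ)) ∂m =
      -∫ s, (s : ℂ) * ((s : ℂ) + z) ^ (-(k : ℤ)) ∂m := by
  have hcont := continuous_ofReal_add_zpow hz (-((k + 1 : ℕ) : ℤ))
  have hshift : ∀ s : ℝ, HasDerivAt (fun s : ℝ ↦ (s : ℂ) + z) 1 s := fun s ↦
    (HasDerivAt.ofReal_comp (hasDerivAt_id s)).add_const z
  rcases eq_or_ne k 0 with rfl | hk
  · have hlog : ∀ s : ℝ, HasDerivAt (fun s : ℝ ↦ Complex.log ((s : ℂ) + z))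
        (((s : ℂ) + z) ^ (-((0 + 1 : ℕ) : ℤ))) s := fun s ↦ by
      refine ((hshift s).clog_real (.inr (by simpa using hz))).congr_deriv ?_
      simp
    rw [hm.integral_mul_deriv _ _ hlog hcont]
    simp [hm.integral_id]
  · have hpow : ∀ s : ℝ, HasDerivAt (fun s : ℝ ↦ -(k : ℂ)⁻¹ * ((s : ℂ) + z) ^ (-(k : ℤ)))
        (((s : ℂ) + z) ^ (-((k + 1 : ℕ) : ℤ))) s := fun s ↦ by
      have h := ((hasDerivAt_zpow (-(k : ℤ)) _ (.inl (ofReal_add_ne_zero hz s))).comp s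
        (hshift s)).const_mul (-(k : ℂ)⁻¹)
      refine h.congr_deriv ?_
      have hk' : (k : ℂ) ≠ 0 := by exact_mod_cast hk
      push_cast
      rw [neg_add', mul_one, ← mul_assoc, neg_mul_neg, inv_mul_cancel₀ hk', one_mul]
    rw [hm.integral_mul_deriv _ _ hpow hcont]
    simp only [mul_left_comm _ (-(k : ℂ)⁻¹), integral_const_mul]
    field_simp

variable [IsFiniteMeasure m]

theorem integrable (hm : IsGegenbauer m k R) {F : ℝ → ℂ} (hF : Continuous F) : Integrable F m :=
  integrable_of_continuous_of_ae_mem_isCompact (isCompact_Icc (a := -R) (b := R))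
    (by simpa only [Set.mem_Icc, ← abs_le] using hm.ae_abs_le) hF

theorem mul_cauchyTransform (hm : IsGegenbauer m k R) (hz : z.im ≠ 0) :
    z * cauchyTransform m k z = (z ^ 2 - R ^ 2) * cauchyTransform m (k + 1) z := by
  have hintegrable : ∀ (g : ℝ → ℂ) (j : ℕ), Continuous g →
      Integrable (fun s : ℝ ↦ g s * ((s : ℂ) + z) ^ (-(j : ℤ))) m := fun g j hg ↦
    hm.integrable (hg.mul (continuous_ofReal_add_zpow hz _))
  have hid : ∀ s : ℝ, z * ((s : ℂ) + z) ^ (-(k : ℤ)) -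
      (z ^ 2 - R ^ 2) * ((s : ℂ) + z) ^ (-((k + 1 : ℕ) : ℤ)) =
      ((R ^ 2 - s ^ 2 : ℝ) : ℂ) * ((s : ℂ) + z) ^ (-((k + 1 : ℕ) : ℤ)) +
        (s : ℂ) * ((s : ℂ) + z) ^ (-(k : ℤ)) := fun s ↦ by
    have hpow : ((s : ℂ) + z) ^ (-(k : ℤ)) =
        ((s : ℂ) + z) * ((s : ℂ) + z) ^ (-((k + 1 : ℕ) : ℤ)) := by
      rw [← zpow_one_add₀ (ofReal_add_ne_zero hz s)]
      push_cast
      congr 1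
      ring
    rw [hpow]
    push_cast
    ring
  rw [← sub_eq_zero, cauchyTransform, cauchyTransform, ← integral_const_mul,
    ← integral_const_mul, ← integral_sub (hintegrable _ _ continuous_const)
      (hintegrable _ _ continuous_const)]
  simp only [hid]
  rw [integral_add (hintegrable _ _ (by fun_prop)) (hintegrable _ _ (by fun_prop)),
    hm.integral_mul_zpow hz, neg_add_cancel]

theorem hasDerivAt_cauchyTransform_sq_mul (hm : IsGegenbauer m k R) (hz : z.im ≠ 0) :
    HasDerivAt (fun z ↦ cauchyTransform m k z ^ 2 * (z ^ 2 - R ^ 2) ^ k) 0 z := by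
  have h := ((hasDerivAt_cauchyTransform (m := m) k hz).pow 2).mul
    ((((hasDerivAt_id z).pow 2).sub_const ((R : ℂ) ^ 2)).pow k)
  refine h.congr_deriv ?_
  rcases k with _ | k
  · simp
  · have hrec := hm.mul_cauchyTransform hz
    simp only [Pi.pow_apply, id, Nat.add_sub_cancel, Nat.cast_add, Nat.cast_one]
    push_cast
    linear_combination (2 * (k + 1) * cauchyTransform m (k + 1) z * (z ^ 2 - R ^ 2) ^ k) * hrec

theorem cauchyTransform_sq_mul (hm : IsGegenbauer m k R) (hz : z.im < 0) :
    cauchyTransform m k z ^ 2 * (z ^ 2 - R ^ 2) ^ k = (m.real Set.univ : ℂ) ^ 2 := by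
  set P : ℂ → ℂ := fun z ↦ cauchyTransform m k z ^ 2 * (z ^ 2 - R ^ 2) ^ k
  have hP : ∀ w ∈ {w : ℂ | w.im < 0}, HasDerivAt P 0 w := fun w hw ↦
    hm.hasDerivAt_cauchyTransform_sq_mul (ne_of_lt hw)
  have hconst : ∀ t : ℝ, 0 < t → P (-(t * Complex.I)) = P z := fun t ht ↦
    (isOpen_lt Complex.continuous_im continuous_const).is_const_of_deriv_eq_zero
      (convex_halfSpace_im_lt 0).isPreconnected
      (fun w hw ↦ (hP w hw).differentiableAt.differentiableWithinAt) (fun w hw ↦ (hP w hw).deriv)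
      (by simpa using ht) hz
  have hinv : Tendsto (fun t : ℝ ↦ ((t⁻¹ : ℝ) : ℂ)) atTop (𝓝 0) := by
    simpa using tendsto_inv_atTop_zero.ofReal
  have hlim : Tendsto (fun t : ℝ ↦ ((-(t * Complex.I)) ^ k *
      cauchyTransform m k (-(t * Complex.I))) ^ 2 * (1 + R ^ 2 * ((t⁻¹ : ℝ) : ℂ) ^ 2) ^ k) atTop
      (𝓝 ((m.real Set.univ : ℂ) ^ 2)) := by
    simpa using ((tendsto_pow_mul_cauchyTransform k).pow 2).mul
      ((((hinv.pow 2).const_mul ((R : ℂ) ^ 2)).const_add 1).pow k)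
  refine tendsto_nhds_unique (tendsto_const_nhds.congr' ?_) hlim
  filter_upwards [eventually_gt_atTop 0] with t ht
  have ht' : (t : ℂ) ≠ 0 := by exact_mod_cast ht.ne'
  have hfactor : (-(t * Complex.I)) ^ 2 - (R : ℂ) ^ 2 =
      (-(t * Complex.I)) ^ 2 * (1 + R ^ 2 * ((t⁻¹ : ℝ) : ℂ) ^ 2) := by
    push_cast
    field_simp
    linear_combination -(R : ℂ) ^ 2 * Complex.I_sq
  refine (hconst t ht).symm.trans ?_
  simp only [P]
  rw [hfactor]
  generalize -(t * Complex.I) = ζ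
  rw [mul_pow]
  ring

theorem cauchyTransform_succ_sq_mul (hm : IsGegenbauer m k R) (hz : z.im < 0) :
    cauchyTransform m (k + 1) z ^ 2 * (z ^ 2 - R ^ 2) ^ (k + 2) =
      z ^ 2 * (m.real Set.univ : ℂ) ^ 2 := by
  calc cauchyTransform m (k + 1) z ^ 2 * (z ^ 2 - R ^ 2) ^ (k + 2)
      = ((z ^ 2 - R ^ 2) * cauchyTransform m (k + 1) z) ^ 2 * (z ^ 2 - R ^ 2) ^ k := by ring
    _ = z ^ 2 * (cauchyTransform m k z ^ 2 * (z ^ 2 - R ^ 2) ^ k) := by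
      rw [← hm.mul_cauchyTransform hz.ne]; ring
    _ = z ^ 2 * (m.real Set.univ : ℂ) ^ 2 := by rw [hm.cauchyTransform_sq_mul hz]

theorem tendsto_I_pow_mul_cauchyTransform_sq (hm : IsGegenbauer m k R) {a : ℝ}
    (ha : a ^ 2 < R ^ 2) :
    Tendsto (fun ε : ℝ ↦
        (Complex.I ^ (k + 1) * cauchyTransform m (k + 1) (a - ε * Complex.I)) ^ 2) (𝓝[>] 0)
      (𝓝 (-((a ^ 2 * m.real Set.univ ^ 2 / (R ^ 2 - a ^ 2) ^ (k + 2) : ℝ) : ℂ))) := by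
  have hne : (R : ℂ) ^ 2 - a ^ 2 ≠ 0 := by exact_mod_cast (sub_pos.2 ha).ne'
  have hz : Tendsto (fun ε : ℝ ↦ (a : ℂ) - ε * Complex.I) (𝓝[>] 0) (𝓝 a) := by
    have h : Continuous fun ε : ℝ ↦ (a : ℂ) - ε * Complex.I := by fun_prop
    simpa using (h.tendsto 0).mono_left nhdsWithin_le_nhds
  have hden : Tendsto (fun ε : ℝ ↦ (R : ℂ) ^ 2 - (a - ε * Complex.I) ^ 2) (𝓝[>] 0)
      (𝓝 ((R : ℂ) ^ 2 - a ^ 2)) := (hz.pow 2).const_sub _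
  have hlim := (((hz.pow 2).mul_const ((m.real Set.univ : ℂ) ^ 2)).div (hden.pow (k + 2))
    (pow_ne_zero _ hne)).neg
  push_cast
  refine hlim.congr' ?_
  filter_upwards [self_mem_nhdsWithin, hden.eventually_ne hne] with ε (hε : 0 < ε) hdenε
  set z : ℂ := a - ε * Complex.I with hz_def
  have hsq := hm.cauchyTransform_succ_sq_mul (z := z) (by simpa [hz_def] using hε)
  have hsign : (Complex.I ^ (k + 1)) ^ 2 * ((R : ℂ) ^ 2 - z ^ 2) ^ (k + 2) =
      -(z ^ 2 - R ^ 2) ^ (k + 2) := by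
    rw [← neg_sub (z ^ 2), neg_pow (z ^ 2 - (R : ℂ) ^ 2), ← pow_mul, mul_comm (k + 1), pow_mul,
      Complex.I_sq, ← mul_assoc, ← pow_add, Odd.neg_one_pow ⟨k + 1, by ring⟩, neg_one_mul]
  simp only [Pi.div_apply]
  rw [← neg_div, div_eq_iff (pow_ne_zero _ hdenε), mul_pow]
  linear_combination hsq - cauchyTransform m (k + 1) z ^ 2 * hsign

end IsGegenbauer

theorem tendsto_re_zero_of_tendsto_sq {α : Type*} {l : Filter α} {w : α → ℂ} {c : ℝ} (hc : 0 ≤ c)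
    (hw : Tendsto (fun i ↦ w i ^ 2) l (𝓝 (-(c : ℂ)))) : Tendsto (fun i ↦ (w i).re) l (𝓝 0) := by
  have hre_sq : ∀ ζ : ℂ, ζ.re ^ 2 = (‖ζ ^ 2‖ + (ζ ^ 2).re) / 2 := fun ζ ↦ by
    rw [norm_pow, Complex.sq_norm, Complex.normSq_apply, sq ζ, Complex.mul_re]
    ring
  have hlim : Tendsto (fun i ↦ (w i).re ^ 2) l (𝓝 0) := by
    simp only [hre_sq]
    simpa [abs_of_nonneg hc] using
      (hw.norm.add (Complex.continuous_re.continuousAt.tendsto.comp hw)).div_const 2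
  simpa [Real.sqrt_sq_eq_abs, tendsto_zero_iff_abs_tendsto_zero, comp_def] using hlim.sqrt

theorem IsGegenbauer.tendsto_re_cauchyTransform {m : Measure ℝ} [IsFiniteMeasure m] {k : ℕ}
    {R a : ℝ} (hm : IsGegenbauer m k R) (ha : a ^ 2 < R ^ 2) :
    Tendsto (fun ε : ℝ ↦
        (Complex.I ^ (k + 1) * cauchyTransform m (k + 1) (a - ε * Complex.I)).re) (𝓝[>] 0)
      (𝓝 0) :=
  tendsto_re_zero_of_tendsto_sq (by have := sub_pos.2 ha; positivity)
    (hm.tendsto_I_pow_mul_cauchyTransform_sq ha)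

theorem IsOrthogonallyInvariant.isGegenbauer_map_inner {V : Type*} [NormedAddCommGroup V]
    [InnerProductSpace ℝ V] [FiniteDimensional ℝ V] [MeasurableSpace V] [BorelSpace V]
    {ν : Measure V} [IsFiniteMeasure ν] (hν : IsOrthogonallyInvariant ν) {k : ℕ}
    (hV : finrank ℝ V = k + 1) {r : ℝ} (hr : ∀ᵐ ω ∂ν, ‖ω‖ = r) (w : V) :
    IsGegenbauer (ν.map fun ω ↦ ⟪w, ω⟫_ℝ) k (r * ‖w‖) := by
  have hw : AEMeasurable (fun ω ↦ ⟪w, ω⟫_ℝ) ν := by fun_prop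
  have hmap : ∀ F : ℝ → ℂ, Continuous F →
      ∫ s, F s ∂(ν.map fun ω ↦ ⟪w, ω⟫_ℝ) = ∫ ω, F ⟪w, ω⟫_ℝ ∂ν := fun F hF ↦
    integral_map hw hF.aestronglyMeasurable
  refine ⟨?_, ?_, fun f f' hf hf' ↦ ?_⟩
  · rw [ae_map_iff hw (measurableSet_le (by fun_prop) (by fun_prop))]
    filter_upwards [hr] with ω hω
    calc |⟪w, ω⟫_ℝ| ≤ ‖w‖ * ‖ω‖ := abs_real_inner_le_norm w ω
      _ = r * ‖w‖ := by rw [hω, mul_comm]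
  · rw [hmap _ Complex.continuous_ofReal]
    simpa using hν.integral_inner_mul_comp_inner_eq_zero (inner_zero_right w) fun _ ↦ 1
  · have hfc : Continuous f := continuous_iff_continuousAt.2 fun s ↦ (hf s).continuousAt
    rw [hmap _ (by fun_prop), hmap _ (by fun_prop)]
    calc ∫ ω, (((r * ‖w‖) ^ 2 - ⟪w, ω⟫_ℝ ^ 2 : ℝ) : ℂ) * f' ⟪w, ω⟫_ℝ ∂ν
        = ∫ ω, ((‖w‖ ^ 2 * ‖ω‖ ^ 2 - ⟪w, ω⟫_ℝ ^ 2 : ℝ) : ℂ) * f' ⟪w, ω⟫_ℝ ∂ν := by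
          refine integral_congr_ae (hr.mono fun ω hω ↦ ?_)
          simp only [hω, mul_pow, mul_comm]
      _ = k * ∫ ω, (⟪w, ω⟫_ℝ : ℂ) * f ⟪w, ω⟫_ℝ ∂ν := by
          rw [hν.integral_mul_deriv_comp_inner (hr.mono fun _ ↦ le_of_eq) hf hf', hV]
          push_cast
          rw [add_sub_cancel_right]

end Gegenbauer

section PolarSection

variable {E : Type*} [NormedAddCommGroup E] [InnerProductSpace ℝ E] {y v : E}

/-- The section `Z(y)` of the unit sphere by the polar hyperplane of `y`. For `y` outside the unit
ball it is the set of points at which the tangents from `y` touch the sphere. -/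
def polarSection (y : E) : Set E :=
  {σ | ‖σ‖ = 1 ∧ ⟪y, σ⟫_ℝ = 1}

theorem isClosed_polarSection (y : E) : IsClosed (polarSection y) :=
  (isClosed_eq continuous_norm continuous_const).inter
    (isClosed_eq (by fun_prop) continuous_const)

theorem norm_sub_of_mem_polarSection {σ : E} (hσ : σ ∈ polarSection y) :
    ‖y - σ‖ = √(‖y‖ ^ 2 - 1) := by
  rw [← Real.sqrt_sq (norm_nonneg (y - σ)), norm_sub_sq_real, hσ.1, hσ.2]
  ring_nf

theorem norm_inv_smul_add_orthogonal_sq (hy : y ≠ 0) (ω : (ℝ ∙ y)ᗮ) :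
    ‖(‖y‖ ^ 2)⁻¹ • y + (ω : E)‖ ^ 2 = (‖y‖ ^ 2)⁻¹ + ‖ω‖ ^ 2 := by
  have hyω : ⟪y, (ω : E)⟫_ℝ = 0 := Submodule.mem_orthogonal_singleton_iff_inner_right.1 ω.2
  have hy' : ‖y‖ ≠ 0 := norm_ne_zero_iff.2 hy
  rw [norm_add_sq_real, real_inner_smul_left, hyω, norm_smul, Submodule.coe_norm, norm_inv,
    norm_pow, norm_norm]
  field_simp
  ring

theorem preimage_polarSection (hy : 1 ≤ ‖y‖) :
    (fun ω : (ℝ ∙ y)ᗮ ↦ (‖y‖ ^ 2)⁻¹ • y + (ω : E)) ⁻¹' polarSection y =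
      sphere 0 √(1 - (‖y‖ ^ 2)⁻¹) := by
  have hy₀ : y ≠ 0 := norm_pos_iff.1 (one_pos.trans_le hy)
  ext ω
  have hinner : ⟪y, (‖y‖ ^ 2)⁻¹ • y + (ω : E)⟫_ℝ = 1 := by
    rw [inner_add_right, real_inner_smul_right, real_inner_self_eq_norm_sq,
      inv_mul_cancel₀ (by positivity), Submodule.mem_orthogonal_singleton_iff_inner_right.1 ω.2,
      add_zero]
  have hr : 0 ≤ 1 - (‖y‖ ^ 2)⁻¹ := sub_nonneg.2 (inv_le_one_of_one_le₀ (one_le_pow₀ hy))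
  rw [Set.mem_preimage, polarSection, Set.mem_ofPred_eq, and_iff_left hinner,
    mem_sphere_zero_iff_norm, eq_comm (a := ‖ω‖), Real.sqrt_eq_iff_eq_sq hr (norm_nonneg _),
    ← sq_eq_sq₀ (norm_nonneg _) zero_le_one, norm_inv_smul_add_orthogonal_sq hy₀, one_pow,
    sub_eq_iff_eq_add', eq_comm]

theorem polarSection_subset_range (hy : y ≠ 0) :
    polarSection y ⊆ Set.range fun ω : (ℝ ∙ y)ᗮ ↦ (‖y‖ ^ 2)⁻¹ • y + (ω : E) := fun σ hσ ↦ by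
  have horth : σ - (‖y‖ ^ 2)⁻¹ • y ∈ (ℝ ∙ y)ᗮ := by
    rw [Submodule.mem_orthogonal_singleton_iff_inner_right, inner_sub_right, hσ.2,
      real_inner_smul_right, real_inner_self_eq_norm_sq, inv_mul_cancel₀ (by positivity), sub_self]
  exact ⟨⟨_, horth⟩, add_sub_cancel _ _⟩

theorem inner_inv_smul_add_orthogonal (y v : E) (ω : (ℝ ∙ y)ᗮ) :
    ⟪v, (‖y‖ ^ 2)⁻¹ • y + (ω : E)⟫_ℝ =
      ⟪v, y⟫_ℝ / ‖y‖ ^ 2 + ⟪(ℝ ∙ y)ᗮ.orthogonalProjectionOnto v, ω⟫_ℝ := by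
  rw [inner_add_right, real_inner_smul_right, div_eq_inv_mul,
    Submodule.inner_orthogonalProjectionOnto_eq_of_mem_right]

theorem norm_orthogonalProjectionOnto_orthogonal_singleton_sq (y v : E) :
    ‖(ℝ ∙ y)ᗮ.orthogonalProjectionOnto v‖ ^ 2 = ‖v‖ ^ 2 - ⟪v, y⟫_ℝ ^ 2 / ‖y‖ ^ 2 := by
  rw [Submodule.norm_sq_eq_add_norm_sq_projection v (ℝ ∙ y), add_comm, eq_sub_iff_add_eq,
    add_right_inj, Submodule.coe_norm, Submodule.coe_orthogonalProjectionOnto_apply,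
    Submodule.starProjection_singleton]
  rcases eq_or_ne y 0 with rfl | hy
  · simp
  · rw [norm_smul, real_inner_comm, mul_pow, Real.norm_eq_abs, sq_abs, RCLike.ofReal_real_eq_id, id]
    field_simp

theorem inner_sq_lt_of_forall_one_lt_norm_add_smul (hv : v ≠ 0) (h : ∀ t : ℝ, 1 < ‖y + t • v‖) :
    ⟪v, y⟫_ℝ ^ 2 < ‖v‖ ^ 2 * (‖y‖ ^ 2 - 1) := by
  have hdiscrim := discrim_lt_zero (a := ‖v‖ ^ 2) (b := 2 * ⟪v, y⟫_ℝ) (c := ‖y‖ ^ 2 - 1)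
    (by positivity) fun t ↦ by
      have ht : 1 < ‖y + t • v‖ ^ 2 := one_lt_pow₀ (h t) two_ne_zero
      rw [norm_add_sq_real, real_inner_smul_right, norm_smul, mul_pow, Real.norm_eq_abs, sq_abs,
        real_inner_comm] at ht
      linarith
  rw [discrim] at hdiscrim
  linarith

theorem inner_div_sq_lt_of_forall_one_lt_norm_add_smul (hv : v ≠ 0)
    (h : ∀ t : ℝ, 1 < ‖y + t • v‖) :
    (⟪v, y⟫_ℝ / ‖y‖ ^ 2) ^ 2 <
      (√(1 - (‖y‖ ^ 2)⁻¹) * ‖(ℝ ∙ y)ᗮ.orthogonalProjectionOnto v‖) ^ 2 := by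
  have hy : 1 < ‖y‖ := by simpa using h 0
  have hlt := inner_sq_lt_of_forall_one_lt_norm_add_smul hv h
  rw [mul_pow, Real.sq_sqrt (sub_nonneg.2 (inv_le_one_of_one_le₀ (one_le_pow₀ hy.le))),
    norm_orthogonalProjectionOnto_orthogonal_singleton_sq, ← sub_pos]
  have hdiff : (1 - (‖y‖ ^ 2)⁻¹) * (‖v‖ ^ 2 - ⟪v, y⟫_ℝ ^ 2 / ‖y‖ ^ 2) - (⟪v, y⟫_ℝ / ‖y‖ ^ 2) ^ 2 =
      (‖v‖ ^ 2 * (‖y‖ ^ 2 - 1) - ⟪v, y⟫_ℝ ^ 2) / ‖y‖ ^ 2 := by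
    field_simp
    ring
  rw [hdiff]
  exact div_pos (sub_pos.2 hlt) (by positivity)

variable [FiniteDimensional ℝ E] [MeasurableSpace E] [BorelSpace E]

theorem hausdorffMeasure_restrict_polarSection {d : ℝ} (hd : 0 ≤ d) (hy : 1 ≤ ‖y‖) :
    μH[d].restrict (polarSection y) =
      (μH[d].restrict (sphere 0 √(1 - (‖y‖ ^ 2)⁻¹))).map
        fun ω : (ℝ ∙ y)ᗮ ↦ (‖y‖ ^ 2)⁻¹ • y + (ω : E) := by
  have hy₀ : y ≠ 0 := norm_pos_iff.1 (one_pos.trans_le hy)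
  have hiso : Isometry fun ω : (ℝ ∙ y)ᗮ ↦ (‖y‖ ^ 2)⁻¹ • y + (ω : E) :=
    (IsometryEquiv.addLeft ((‖y‖ ^ 2)⁻¹ • y)).isometry.comp isometry_subtype_coe
  rw [← preimage_polarSection hy, ← hiso.isClosedEmbedding.measurableEmbedding.restrict_map,
    hiso.map_hausdorffMeasure (.inl hd),
    Measure.restrict_restrict_of_subset (polarSection_subset_range hy₀)]

theorem hausdorffMeasure_polarSection_lt_top {k : ℕ} (hE : finrank ℝ E = k + 2) (hy : 1 ≤ ‖y‖) :
    μH[k] (polarSection y) < ⊤ := by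
  have : Fact (finrank ℝ E = k + 1 + 1) := ⟨hE⟩
  have hV : finrank ℝ (ℝ ∙ y)ᗮ = k + 1 :=
    Submodule.finrank_orthogonal_span_singleton (norm_pos_iff.1 (one_pos.trans_le hy))
  rw [← Measure.restrict_apply_univ, hausdorffMeasure_restrict_polarSection k.cast_nonneg hy,
    Measure.map_apply (by fun_prop) .univ, Set.preimage_univ, Measure.restrict_apply_univ]
  exact hausdorffMeasure_sphere_lt_top hV _

theorem isGegenbauer_map_inner_polarSection {k : ℕ} (hE : finrank ℝ E = k + 2) (hy : 1 ≤ ‖y‖)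
    (v : E) :
    IsGegenbauer ((μH[k].restrict (polarSection y)).map fun σ ↦ ⟪v, σ⟫_ℝ - ⟪v, y⟫_ℝ / ‖y‖ ^ 2) k
      (√(1 - (‖y‖ ^ 2)⁻¹) * ‖(ℝ ∙ y)ᗮ.orthogonalProjectionOnto v‖) := by
  have : Fact (finrank ℝ E = k + 1 + 1) := ⟨hE⟩
  have hV : finrank ℝ (ℝ ∙ y)ᗮ = k + 1 :=
    Submodule.finrank_orthogonal_span_singleton (norm_pos_iff.1 (one_pos.trans_le hy))
  have : IsFiniteMeasure (μH[k].restrict (sphere (0 : (ℝ ∙ y)ᗮ) √(1 - (‖y‖ ^ 2)⁻¹))) :=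
    isFiniteMeasure_restrict.2 (hausdorffMeasure_sphere_lt_top hV _).ne
  rw [hausdorffMeasure_restrict_polarSection k.cast_nonneg hy,
    Measure.map_map (by fun_prop) (by fun_prop)]
  simp only [comp_def, inner_inv_smul_add_orthogonal, add_sub_cancel_left]
  refine (isOrthogonallyInvariant_hausdorffMeasure_restrict_sphere (k : ℝ) _).isGegenbauer_map_inner
    hV ?_ _
  filter_upwards [ae_restrict_mem isClosed_sphere.measurableSet] with ω hω
  exact mem_sphere_zero_iff_norm.1 hω

theorem setIntegral_polarSection_eq_cauchyTransform {d : ℝ} (y v : E) (a : ℝ) (j : ℕ) (z : ℂ) :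
    ∫ σ in polarSection y, ((‖y - σ‖⁻¹ : ℝ) : ℂ) * ((⟪v, σ⟫_ℝ : ℂ) + z) ^ (-(j : ℤ)) ∂μH[d] =
      ((√(‖y‖ ^ 2 - 1))⁻¹ : ℝ) *
        cauchyTransform ((μH[d].restrict (polarSection y)).map fun σ ↦ ⟪v, σ⟫_ℝ - a) j (a + z) := by
  rw [cauchyTransform, integral_map (by fun_prop)
    (measurable_ofReal_add_zpow_neg j _).aestronglyMeasurable, ← integral_const_mul]
  refine setIntegral_congr_fun (isClosed_polarSection y).measurableSet fun σ hσ ↦ ?_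
  simp only [norm_sub_of_mem_polarSection hσ]
  push_cast
  ring_nf

end PolarSection

theorem re_Qn_tendsto_zero_general {E : Type*} [NormedAddCommGroup E] [InnerProductSpace ℝ E]
    [FiniteDimensional ℝ E] [MeasurableSpace E] [BorelSpace E] {n : ℕ} (hn : 1 ≤ n)
    (hE : finrank ℝ E = n + 1) {x y : E} (hxy : x ≠ y)
    (hline : ∀ t : ℝ, y + t • (x - y) ∉ closedBall (0 : E) 1) :
    Tendsto (fun ε : ℝ ↦
        (Complex.I ^ n *
          ∫ σ in polarSection y, ((‖y - σ‖⁻¹ : ℝ) : ℂ) *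
            ((⟪x - y, σ⟫_ℝ : ℂ) - (ε : ℂ) * Complex.I) ^ (-(n : ℤ)) ∂μH[(n : ℝ) - 1]).re)
      (𝓝[>] 0) (𝓝 0) := by
  obtain ⟨k, rfl⟩ : ∃ k, n = k + 1 := ⟨n - 1, by lia⟩
  have hd : ((k + 1 : ℕ) : ℝ) - 1 = k := by simp
  simp only [mem_closedBall_zero_iff, not_le] at hline
  have hy : 1 ≤ ‖y‖ := by simpa using (hline 0).le
  have : IsFiniteMeasure (μH[k].restrict (polarSection y)) :=
    isFiniteMeasure_restrict.2 (hausdorffMeasure_polarSection_lt_top hE hy).ne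
  have hlim := (isGegenbauer_map_inner_polarSection hE hy (x - y)).tendsto_re_cauchyTransform
    (inner_div_sq_lt_of_forall_one_lt_norm_add_smul (sub_ne_zero.2 hxy) hline)
  refine (mul_zero (√(‖y‖ ^ 2 - 1))⁻¹ ▸ hlim.const_mul _).congr fun ε ↦ ?_
  simp only [hd, sub_eq_add_neg _ ((ε : ℂ) * Complex.I)]
  rw [setIntegral_polarSection_eq_cauchyTransform y (x - y) (⟪x - y, y⟫_ℝ / ‖y‖ ^ 2),
    mul_left_comm, Complex.re_ofReal_mul]

/-- Lemma 2 (condition (III)) for the spherical cam: if the line through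
`x ≠ y` avoids the closed unit ball, then the real part of
`iⁿ ∫_{Z(y)} ‖y − σ‖⁻¹ (⟪x − y, σ⟫ − iε)^{−n} dμ(σ)` tends to `0` as
`ε → 0⁺`, where `μ` is the `(n−1)`-dimensional Hausdorff measure restricted to
`Z(y) = {σ : ‖σ‖ = 1, ⟪y, σ⟫ = 1}`. -/
theorem re_Qn_tendsto_zero (n : ℕ) (hn : 1 ≤ n)
    (x y : EuclideanSpace ℝ (Fin (n + 1))) (hxy : x ≠ y)
    (hline : ∀ t : ℝ, y + t • (x - y) ∉
      Metric.closedBall (0 : EuclideanSpace ℝ (Fin (n + 1))) 1)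
    (μ : Measure (EuclideanSpace ℝ (Fin (n + 1))))
    (hμ : μ = (MeasureTheory.Measure.hausdorffMeasure ((n : ℝ) - 1)).restrict
      {σ : EuclideanSpace ℝ (Fin (n + 1)) | ‖σ‖ = 1 ∧ ⟪y, σ⟫_ℝ = 1}) :
    Tendsto (fun ε : ℝ =>
        (Complex.I ^ n *
          ∫ σ in {σ : EuclideanSpace ℝ (Fin (n + 1)) | ‖σ‖ = 1 ∧ ⟪y, σ⟫_ℝ = 1},
            ((‖y - σ‖⁻¹ : ℝ) : ℂ) *
              ((⟪x - y, σ⟫_ℝ : ℂ) - (ε : ℂ) * Complex.I) ^ (-(n : ℤ)) ∂μ).re)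
      (𝓝[>] (0 : ℝ)) (𝓝 0) := by
  subst hμ
  have hZ := (isClosed_polarSection y).measurableSet
  rw [polarSection] at hZ
  simp only [Measure.restrict_restrict hZ, Set.inter_self]
  exact re_Qn_tendsto_zero_general hn finrank_euclideanSpace_fin hxy hline
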